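/- arXiv:1810.11648 — 12 statements merged into one kernel-verified Lean document; each statement's English description precedes it below -/
import Mathlib

section
/- Every local (classical) (2,2,2) box that satisfies the three Hardy zero constraints P(0,1|0,1) = 0, P(1,0|1,0) = 0 and P(0,0|1,1) = 0 also satisfies P(0,0|0,0) = 0. -/
/-- A (2,2,2) box is local (classical) if it is a finite convex combination of
deterministic boxes. -/
def IsLocalBox (P : Fin 2 → Fin 2 → Fin 2 → Fin 2 → ℝ) : Prop :=
  ∃ (Λ : Type) (s : Finset Λ) (q : Λ → ℝ) (f g : Λ → Fin 2 → Fin 2),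
    (∀ l ∈ s, 0 ≤ q l) ∧ (∑ l ∈ s, q l = 1) ∧
    ∀ a b x y, P a b x y =
      ∑ l ∈ s, q l * (if a = f l x then 1 else 0) * (if b = g l y then 1 else 0)

/-- Every local (2,2,2) box satisfying the three Hardy zero constraints also has
`P(0,0|0,0) = 0`. -/
theorem local_box_hardy_zero (P : Fin 2 → Fin 2 → Fin 2 → Fin 2 → ℝ)
    (hpos : ∀ a b x y, 0 ≤ P a b x y)
    (hnorm : ∀ x y, ∑ a, ∑ b, P a b x y = 1)
    (hloc : IsLocalBox P)
    (h1 : P 0 1 0 1 = 0) (h2 : P 1 0 1 0 = 0) (h3 : P 0 0 1 1 = 0) :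
    P 0 0 0 0 = 0 := by
  obtain ⟨Λ, s, q, f, g, hq, -, hP⟩ := hloc
  have key : P 0 0 0 0 ≤ P 0 1 0 1 + P 1 0 1 0 + P 0 0 1 1 := by
    rw [hP, hP, hP, hP, ← Finset.sum_add_distrib, ← Finset.sum_add_distrib]
    refine Finset.sum_le_sum fun l hl => ?_
    have h := hq l hl
    generalize f l 0 = a
    generalize f l 1 = b
    generalize g l 0 = c
    generalize g l 1 = d
    fin_cases a <;> fin_cases b <;> fin_cases c <;> fin_cases d <;> simp <;> linarith
  have := hpos 0 0 0 0
  linarith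
end

section
/- For 0 < θ < π/2 let |ψ_θ⟩ = (1/√(1+cos²θ))·(cosθ(|0⟩⊗|1⟩ + |1⟩⊗|0⟩) + sinθ|1⟩⊗|1⟩) ∈ ℂ²⊗ℂ², and define measurement vectors v_{1,0} = |0⟩, v_{1,1} = |1⟩, v_{0,0} = sinθ|0⟩ − cosθ|1⟩, v_{0,1} = cosθ|0⟩ + sinθ|1⟩. Then the (2,2,2) box P(a,b|x,y) = |⟨v_{x,a}⊗v_{y,b}, ψ_θ⟩|² satisfies P(0,1|0,1) = 0, P(1,0|1,0) = 0, P(0,0|1,1) = 0, and P(0,0|0,0) = sin²θ·cos⁴θ/(1+cos²θ) > 0. In particular, when cos²θ = (√5−1)/2, one has P(0,0|0,0) = (5√5−11)/2. -/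
noncomputable section

/-- The standard basis vector `|0⟩` of `ℂ²`. -/
def ket0 : EuclideanSpace ℂ (Fin 2) := WithLp.toLp 2 (fun i => if i = 0 then 1 else 0)

/-- The standard basis vector `|1⟩` of `ℂ²`. -/
def ket1 : EuclideanSpace ℂ (Fin 2) := WithLp.toLp 2 (fun i => if i = 1 then 1 else 0)

/-- The tensor product of two vectors of `ℂ²`, realized in `ℂ² ⊗ ℂ² ≅ ℂ⁴`. -/
def tens (v w : EuclideanSpace ℂ (Fin 2)) : EuclideanSpace ℂ (Fin 2 × Fin 2) :=
  WithLp.toLp 2 (fun p => v p.1 * w p.2)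

/-- The Hardy state `|ψ_θ⟩`. -/
def hardyState (θ : ℝ) : EuclideanSpace ℂ (Fin 2 × Fin 2) :=
  ((1 / Real.sqrt (1 + Real.cos θ ^ 2) : ℝ) : ℂ) •
    (((Real.cos θ : ℂ)) • (tens ket0 ket1 + tens ket1 ket0) +
      ((Real.sin θ : ℂ)) • tens ket1 ket1)

/-- The measurement vectors `v_{x,a}`. -/
def mvec (θ : ℝ) (x a : Fin 2) : EuclideanSpace ℂ (Fin 2) :=
  if x = 1 then (if a = 0 then ket0 else ket1)
  else
    (if a = 0 then (Real.sin θ : ℂ) • ket0 - (Real.cos θ : ℂ) • ket1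
     else (Real.cos θ : ℂ) • ket0 + (Real.sin θ : ℂ) • ket1)

/-- The quantum (2,2,2) box `P(a,b|x,y) = |⟨v_{x,a} ⊗ v_{y,b}, ψ_θ⟩|²`. -/
def hardyBox (θ : ℝ) (a b x y : Fin 2) : ℝ :=
  ‖(inner ℂ (tens (mvec θ x a) (mvec θ y b)) (hardyState θ) : ℂ)‖ ^ 2

theorem hardyBox_formula (θ : ℝ) (a b x y : Fin 2) (r : ℝ)
    (h : (inner ℂ (tens (mvec θ x a) (mvec θ y b))
      (((Real.cos θ : ℂ)) • (tens ket0 ket1 + tens ket1 ket0) +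
      ((Real.sin θ : ℂ)) • tens ket1 ket1) : ℂ) = (r : ℂ)) :
    hardyBox θ a b x y = r ^ 2 / (1 + Real.cos θ ^ 2) := by
  have hp : 0 ≤ 1 + Real.cos θ ^ 2 := by positivity
  unfold hardyBox hardyState
  rw [inner_smul_right, h, ← Complex.ofReal_mul, Complex.norm_real, Real.norm_eq_abs, sq_abs,
    mul_pow, div_pow, Real.sq_sqrt hp]
  ring

/-- The quantum box obtained from the Hardy state and measurements satisfies the
Hardy zero constraints and has `P(0,0|0,0) = sin²θ·cos⁴θ/(1+cos²θ) > 0`; when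
`cos²θ = (√5−1)/2`, one gets `P(0,0|0,0) = (5√5−11)/2`. -/
theorem hardy_box_paradox (θ : ℝ) (hθ0 : 0 < θ) (hθ1 : θ < Real.pi / 2) :
    hardyBox θ 0 1 0 1 = 0 ∧
    hardyBox θ 1 0 1 0 = 0 ∧
    hardyBox θ 0 0 1 1 = 0 ∧
    hardyBox θ 0 0 0 0 = Real.sin θ ^ 2 * Real.cos θ ^ 4 / (1 + Real.cos θ ^ 2) ∧
    0 < hardyBox θ 0 0 0 0 ∧
    (Real.cos θ ^ 2 = (Real.sqrt 5 - 1) / 2 →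
      hardyBox θ 0 0 0 0 = (5 * Real.sqrt 5 - 11) / 2) := by
  have hs : 0 < Real.sin θ := Real.sin_pos_of_pos_of_lt_pi hθ0 (by linarith [Real.pi_pos])
  have hc : 0 < Real.cos θ := Real.cos_pos_of_mem_Ioo ⟨by linarith, hθ1⟩
  have h1 : hardyBox θ 0 1 0 1 = 0 := by
    rw [hardyBox_formula θ 0 1 0 1 0]
    · simp
    · simp [PiLp.inner_apply, Fintype.sum_prod_type, tens, mvec, ket0, ket1,
        -Complex.ofReal_cos, -Complex.ofReal_sin]
      try ring
  have h2 : hardyBox θ 1 0 1 0 = 0 := by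
    rw [hardyBox_formula θ 1 0 1 0 0]
    · simp
    · simp [PiLp.inner_apply, Fintype.sum_prod_type, tens, mvec, ket0, ket1,
        -Complex.ofReal_cos, -Complex.ofReal_sin]
      try ring
  have h3 : hardyBox θ 0 0 1 1 = 0 := by
    rw [hardyBox_formula θ 0 0 1 1 0]
    · simp
    · simp [PiLp.inner_apply, Fintype.sum_prod_type, tens, mvec, ket0, ket1,
        -Complex.ofReal_cos, -Complex.ofReal_sin]
  have h4 : hardyBox θ 0 0 0 0 =
      Real.sin θ ^ 2 * Real.cos θ ^ 4 / (1 + Real.cos θ ^ 2) := by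
    rw [hardyBox_formula θ 0 0 0 0 (-(Real.sin θ * Real.cos θ ^ 2))]
    · ring
    · simp [PiLp.inner_apply, Fintype.sum_prod_type, tens, mvec, ket0, ket1,
        -Complex.ofReal_cos, -Complex.ofReal_sin]
      ring
  refine ⟨h1, h2, h3, h4, ?_, ?_⟩
  · rw [h4]; positivity
  · intro hg
    have h5 : Real.sqrt 5 ^ 2 = 5 := Real.sq_sqrt (by norm_num)
    have h6 : Real.cos θ ^ 4 = (Real.cos θ ^ 2) ^ 2 := by ring
    have h0 : 0 ≤ Real.sqrt 5 := Real.sqrt_nonneg 5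
    have hne : 1 + (Real.sqrt 5 - 1) / 2 ≠ 0 := by linarith
    rw [h4, h6, Real.sin_sq, hg, div_eq_iff hne]
    generalize Real.sqrt 5 = t at *
    linear_combination (-t / 8 - 5 / 8) * h5

end
end

section
/- Every no-signaling (2,2,2) box satisfies p_H ≤ 1/2 + z_H/2. -/
/-- Every no-signaling (2,2,2) box satisfies `p_H ≤ 1/2 + z_H/2`. -/
theorem noSignaling_hardy_upper_bound (P : Fin 2 → Fin 2 → Fin 2 → Fin 2 → ℝ)
    (hpos : ∀ a b x y, 0 ≤ P a b x y)
    (hnorm : ∀ x y, ∑ a, ∑ b, P a b x y = 1)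
    (hnsA : ∀ a x y y', ∑ b, P a b x y = ∑ b, P a b x y')
    (hnsB : ∀ b y x x', ∑ a, P a b x y = ∑ a, P a b x' y) :
    P 0 0 0 0 ≤ 1 / 2 + (P 0 1 0 1 + P 1 0 1 0 + P 0 0 1 1) / 2 := by
  have h1 := hnsA 0 0 0 1
  have h2 := hnsB 0 1 0 1
  have h3 := hnsB 0 0 0 1
  have h4 := hnsA 0 1 0 1
  have h5 := hnorm 1 1
  simp only [Fin.sum_univ_two] at h1 h2 h3 h4 h5
  linarith [hpos 0 1 0 0, hpos 1 0 0 0, hpos 1 0 0 1, hpos 0 1 1 0, hpos 1 1 1 1]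
end

section
/- Every no-signaling (2,2,2) box satisfies B_H ≤ p_H ≤ 1 − B_H and z_H ≤ 1 − 2·B_H. -/
/-- Every no-signaling (2,2,2) box satisfies `B_H ≤ p_H ≤ 1 − B_H` and
`z_H ≤ 1 − 2·B_H`, where `p_H = P(0,0|0,0)`,
`z_H = P(0,1|0,1) + P(1,0|1,0) + P(0,0|1,1)` and `B_H = p_H − z_H`. -/
theorem noSignaling_hardy_bounds (P : Fin 2 → Fin 2 → Fin 2 → Fin 2 → ℝ)
    (hpos : ∀ a b x y, 0 ≤ P a b x y)
    (hnorm : ∀ x y, ∑ a, ∑ b, P a b x y = 1)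
    (hnsA : ∀ a x y y', ∑ b, P a b x y = ∑ b, P a b x y')
    (hnsB : ∀ b y x x', ∑ a, P a b x y = ∑ a, P a b x' y) :
    (P 0 0 0 0 - (P 0 1 0 1 + P 1 0 1 0 + P 0 0 1 1)) ≤ P 0 0 0 0 ∧
    P 0 0 0 0 ≤ 1 - (P 0 0 0 0 - (P 0 1 0 1 + P 1 0 1 0 + P 0 0 1 1)) ∧
    P 0 1 0 1 + P 1 0 1 0 + P 0 0 1 1 ≤
      1 - 2 * (P 0 0 0 0 - (P 0 1 0 1 + P 1 0 1 0 + P 0 0 1 1)) := by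
  simp only [Fin.sum_univ_two] at hnorm hnsA hnsB
  have n00 := hnorm 0 0
  have n01 := hnorm 0 1
  have n10 := hnorm 1 0
  have n11 := hnorm 1 1
  have a00 := hnsA 0 0 0 1
  have a01 := hnsA 0 1 0 1
  have a10 := hnsA 1 0 0 1
  have a11 := hnsA 1 1 0 1
  have b00 := hnsB 0 0 0 1
  have b01 := hnsB 0 1 0 1
  have b10 := hnsB 1 0 0 1
  have b11 := hnsB 1 1 0 1
  have p1 := hpos 0 0 0 0
  have p2 := hpos 0 1 0 0
  have p3 := hpos 1 0 0 0
  have p4 := hpos 1 1 0 0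
  have p5 := hpos 0 0 0 1
  have p6 := hpos 0 1 0 1
  have p7 := hpos 1 0 0 1
  have p8 := hpos 1 1 0 1
  have q1 := hpos 0 0 1 0
  have q2 := hpos 0 1 1 0
  have q3 := hpos 1 0 1 0
  have q4 := hpos 1 1 1 0
  have q5 := hpos 0 0 1 1
  have q6 := hpos 0 1 1 1
  have q7 := hpos 1 0 1 1
  have q8 := hpos 1 1 1 1
  clear hpos hnorm hnsA hnsB
  refine ⟨?_, ?_, ?_⟩ <;> linarith
end

section
/- Let P be a no-signaling (2,2,2) box. Then for every quadruple (a,b,x,y) with a ⊕ b = x·y one has B_H ≤ P(a,b|x,y) ≤ 1 − B_H, and for every quadruple (a,b,x,y) with a ⊕ b ≠ x·y one has P(a,b|x,y) ≤ 1 − 2·B_H. -/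
/-- For any no-signaling (2,2,2) box: every entry with `a ⊕ b = x·y` satisfies
`B_H ≤ P(a,b|x,y) ≤ 1 − B_H`, and every entry with `a ⊕ b ≠ x·y` satisfies
`P(a,b|x,y) ≤ 1 − 2·B_H`. -/
theorem noSignaling_all_entries_bounds (P : Fin 2 → Fin 2 → Fin 2 → Fin 2 → ℝ)
    (hpos : ∀ a b x y, 0 ≤ P a b x y)
    (hnorm : ∀ x y, ∑ a, ∑ b, P a b x y = 1)
    (hnsA : ∀ a x y y', ∑ b, P a b x y = ∑ b, P a b x y')
    (hnsB : ∀ b y x x', ∑ a, P a b x y = ∑ a, P a b x' y) :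
    (∀ a b x y : Fin 2, a + b = x * y →
      (P 0 0 0 0 - (P 0 1 0 1 + P 1 0 1 0 + P 0 0 1 1)) ≤ P a b x y ∧
      P a b x y ≤ 1 - (P 0 0 0 0 - (P 0 1 0 1 + P 1 0 1 0 + P 0 0 1 1))) ∧
    (∀ a b x y : Fin 2, a + b ≠ x * y →
      P a b x y ≤ 1 - 2 * (P 0 0 0 0 - (P 0 1 0 1 + P 1 0 1 0 + P 0 0 1 1))) := by
  have hn00 := hnorm 0 0
  have hn01 := hnorm 0 1
  have hn10 := hnorm 1 0
  have hn11 := hnorm 1 1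
  have hA00 := hnsA 0 0 0 1
  have hA01 := hnsA 0 1 0 1
  have hA10 := hnsA 1 0 0 1
  have hA11 := hnsA 1 1 0 1
  have hB00 := hnsB 0 0 0 1
  have hB01 := hnsB 0 1 0 1
  have hB10 := hnsB 1 0 0 1
  have hB11 := hnsB 1 1 0 1
  have p0 : ∀ x y, 0 ≤ P 0 0 x y := hpos 0 0
  have p1 : ∀ x y, 0 ≤ P 0 1 x y := hpos 0 1
  have p2 : ∀ x y, 0 ≤ P 1 0 x y := hpos 1 0
  have p3 : ∀ x y, 0 ≤ P 1 1 x y := hpos 1 1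
  simp only [Fin.sum_univ_two] at hn00 hn01 hn10 hn11 hA00 hA01 hA10 hA11 hB00 hB01 hB10 hB11
  refine ⟨?_, ?_⟩
  · intro a b x y h
    fin_cases a <;> fin_cases b <;> fin_cases x <;> fin_cases y <;>
      first
      | exact absurd h (by decide)
      | (clear h
         simp only [Fin.zero_eta, Fin.mk_one, Fin.isValue]
         constructor <;>
         linarith [p0 0 0, p0 0 1, p0 1 0, p0 1 1, p1 0 0, p1 0 1, p1 1 0, p1 1 1,
          p2 0 0, p2 0 1, p2 1 0, p2 1 1, p3 0 0, p3 0 1, p3 1 0, p3 1 1])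
  · intro a b x y h
    fin_cases a <;> fin_cases b <;> fin_cases x <;> fin_cases y <;>
      first
      | exact absurd (by decide) h
      | (clear h
         simp only [Fin.zero_eta, Fin.mk_one, Fin.isValue]
         linarith [p0 0 0, p0 0 1, p0 1 0, p0 1 1, p1 0 0, p1 0 1, p1 1 0, p1 1 1,
          p2 0 0, p2 0 1, p2 1 0, p2 1 1, p3 0 0, p3 0 1, p3 1 0, p3 1 1])
end

section
/- Let 0 ≤ ε < 1/2, let P be a no-signaling (2,2,2) box, and let ν be a probability distribution on {0,1}² with (1/2−ε)² ≤ ν(x,y) ≤ (1/2+ε)² for all (x,y). Define B̄^SV_ε = (1/2−ε)²·ν(0,0)·P(0,0|0,0) − (1/2+ε)²·(ν(0,1)·P(0,1|0,1) + ν(1,0)·P(1,0|1,0) + ν(1,1)·P(0,0|1,1)). Then for every quadruple (a,b,x,y) with a ⊕ b = x·y one has B̄^SV_ε/((1/4−ε²)²) ≤ P(a,b|x,y) ≤ 1 − B̄^SV_ε/((1/4−ε²)²), and for every quadruple with a ⊕ b ≠ x·y one has P(a,b|x,y) ≤ 1 − B̄^SV_ε/((1/4−ε²)²). -/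
/-- For a no-signaling (2,2,2) box with inputs chosen from an ε-SV source, every
entry with `a ⊕ b = x·y` is bounded between `B̄^SV_ε/((1/4−ε²)²)` and
`1 − B̄^SV_ε/((1/4−ε²)²)`, and every other entry is bounded above by
`1 − B̄^SV_ε/((1/4−ε²)²)`. -/
theorem noSignaling_mdl_entry_bounds (ε : ℝ) (hε0 : 0 ≤ ε) (hε1 : ε < 1 / 2)
    (P : Fin 2 → Fin 2 → Fin 2 → Fin 2 → ℝ)
    (hpos : ∀ a b x y, 0 ≤ P a b x y)
    (hnorm : ∀ x y, ∑ a, ∑ b, P a b x y = 1)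
    (hnsA : ∀ a x y y', ∑ b, P a b x y = ∑ b, P a b x y')
    (hnsB : ∀ b y x x', ∑ a, P a b x y = ∑ a, P a b x' y)
    (ν : Fin 2 → Fin 2 → ℝ)
    (hνsum : ∑ x, ∑ y, ν x y = 1)
    (hνlow : ∀ x y, (1 / 2 - ε) ^ 2 ≤ ν x y)
    (hνhigh : ∀ x y, ν x y ≤ (1 / 2 + ε) ^ 2) :
    (∀ a b x y : Fin 2, a + b = x * y →
      ((1 / 2 - ε) ^ 2 * ν 0 0 * P 0 0 0 0 -
            (1 / 2 + ε) ^ 2 *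
              (ν 0 1 * P 0 1 0 1 + ν 1 0 * P 1 0 1 0 + ν 1 1 * P 0 0 1 1)) /
          ((1 / 4 - ε ^ 2) ^ 2) ≤ P a b x y ∧
        P a b x y ≤
          1 - ((1 / 2 - ε) ^ 2 * ν 0 0 * P 0 0 0 0 -
                (1 / 2 + ε) ^ 2 *
                  (ν 0 1 * P 0 1 0 1 + ν 1 0 * P 1 0 1 0 + ν 1 1 * P 0 0 1 1)) /
              ((1 / 4 - ε ^ 2) ^ 2)) ∧
    (∀ a b x y : Fin 2, a + b ≠ x * y →
      P a b x y ≤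
        1 - ((1 / 2 - ε) ^ 2 * ν 0 0 * P 0 0 0 0 -
              (1 / 2 + ε) ^ 2 *
                (ν 0 1 * P 0 1 0 1 + ν 1 0 * P 1 0 1 0 + ν 1 1 * P 0 0 1 1)) /
            ((1 / 4 - ε ^ 2) ^ 2)) := by
  have hl : 0 < (1 / 2 - ε) ^ 2 := by
    have : 0 < 1 / 2 - ε := by linarith
    positivity
  have hu : 0 < (1 / 2 + ε) ^ 2 := by positivity
  have hlu : (1 / 4 - ε ^ 2) ^ 2 = (1 / 2 - ε) ^ 2 * (1 / 2 + ε) ^ 2 := by ring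
  have key : ((1 / 2 - ε) ^ 2 * ν 0 0 * P 0 0 0 0 -
            (1 / 2 + ε) ^ 2 *
              (ν 0 1 * P 0 1 0 1 + ν 1 0 * P 1 0 1 0 + ν 1 1 * P 0 0 1 1)) /
          ((1 / 4 - ε ^ 2) ^ 2) ≤ P 0 0 0 0 - P 0 1 0 1 - P 1 0 1 0 - P 0 0 1 1 := by
    rw [hlu, div_le_iff₀ (mul_pos hl hu)]
    have h0 := mul_le_mul_of_nonneg_left
      (mul_le_mul_of_nonneg_right (hνhigh 0 0) (hpos 0 0 0 0)) hl.le
    have h1 := mul_le_mul_of_nonneg_left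
      (mul_le_mul_of_nonneg_right (hνlow 0 1) (hpos 0 1 0 1)) hu.le
    have h2 := mul_le_mul_of_nonneg_left
      (mul_le_mul_of_nonneg_right (hνlow 1 0) (hpos 1 0 1 0)) hu.le
    have h3 := mul_le_mul_of_nonneg_left
      (mul_le_mul_of_nonneg_right (hνlow 1 1) (hpos 0 0 1 1)) hu.le
    linarith
  generalize ((1 / 2 - ε) ^ 2 * ν 0 0 * P 0 0 0 0 -
            (1 / 2 + ε) ^ 2 *
              (ν 0 1 * P 0 1 0 1 + ν 1 0 * P 1 0 1 0 + ν 1 1 * P 0 0 1 1)) /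
          ((1 / 4 - ε ^ 2) ^ 2) = B at key ⊢
  have A1 := hnsA 0 0 0 1
  have A2 := hnsA 0 1 0 1
  have A3 := hnsA 1 0 0 1
  have A4 := hnsA 1 1 0 1
  have B1 := hnsB 0 0 0 1
  have B2 := hnsB 0 1 0 1
  have B3 := hnsB 1 0 0 1
  have B4 := hnsB 1 1 0 1
  have N1 := hnorm 0 0
  have N2 := hnorm 0 1
  have N3 := hnorm 1 0
  have N4 := hnorm 1 1
  simp only [Fin.sum_univ_two] at A1 A2 A3 A4 B1 B2 B3 B4 N1 N2 N3 N4
  have low : ∀ a b x y : Fin 2, a + b = x * y → B ≤ P a b x y := by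
    intro a b x y h
    fin_cases a <;> fin_cases b <;> fin_cases x <;> fin_cases y <;>
      first
      | (exfalso; revert h; decide)
      | (simp only [Fin.zero_eta, Fin.mk_one]
         linarith [hpos 0 0 0 0, hpos 0 1 0 0, hpos 1 0 0 0, hpos 1 1 0 0,
           hpos 0 0 0 1, hpos 0 1 0 1, hpos 1 0 0 1, hpos 1 1 0 1,
           hpos 0 0 1 0, hpos 0 1 1 0, hpos 1 0 1 0, hpos 1 1 1 0,
           hpos 0 0 1 1, hpos 0 1 1 1, hpos 1 0 1 1, hpos 1 1 1 1])
  have up : ∀ a b x y : Fin 2, P a b x y ≤ 1 - B := by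
    intro a b x y
    -- some winning outcome `(a', b')` of the same row differs from `(a, b)`
    have hN := hnorm x y
    have h1 := low 0 (x * y) x y (by simp)
    have h2 := low 1 (1 + x * y) x y (by clear hN h1; revert x y; decide)
    simp only [Fin.sum_univ_two] at hN
    have p1 := hpos 0 0 x y
    have p2 := hpos 0 1 x y
    have p3 := hpos 1 0 x y
    have p4 := hpos 1 1 x y
    have hc : x * y = 0 ∨ x * y = 1 := by
      clear hN h1 h2 p1 p2 p3 p4; revert x y; decide
    have e : (1 : Fin 2) + 1 = 0 := rfl
    rcases hc with hc | hc <;> rw [hc] at h1 h2 <;> simp only [e, add_zero] at h1 h2 <;>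
      fin_cases a <;> fin_cases b <;> simp only [Fin.zero_eta, Fin.mk_one] <;> linarith
  exact ⟨fun a b x y h => ⟨low a b x y h, up a b x y⟩, fun a b x y _ => up a b x y⟩
end

section
/- Let P be a no-signaling box with Alice input set {0,1}, a finite Bob input set Y with |Y| ≥ 2, and finite output sets A for Alice and B for Bob. Suppose there exists a₀ ∈ A such that Alice's marginal on input x = 0 is deterministic, i.e. Σ_b P(a₀, b | 0, y) = 1 for all y ∈ Y. Then P is local. -/
/-- A two-party box: nonnegative entries, normalized for every input pair. -/
def IsBox {A B X Y : Type*} [Fintype A] [Fintype B]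
    (P : A → B → X → Y → ℝ) : Prop :=
  (∀ a b x y, 0 ≤ P a b x y) ∧ ∀ x y, (∑ a, ∑ b, P a b x y) = 1

/-- The no-signaling conditions: each party's marginal is independent of the
other party's input. -/
def NoSignaling {A B X Y : Type*} [Fintype A] [Fintype B]
    (P : A → B → X → Y → ℝ) : Prop :=
  (∀ a x y y', (∑ b, P a b x y) = ∑ b, P a b x y') ∧
  (∀ b y x x', (∑ a, P a b x y) = ∑ a, P a b x' y)

/-- A box is local (classical) if it is a finite convex combination of
deterministic boxes. -/
def IsLocal {A B X Y : Type*} [Fintype A] [Fintype B] [DecidableEq A] [DecidableEq B]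
    (P : A → B → X → Y → ℝ) : Prop :=
  ∃ (Λ : Type) (s : Finset Λ) (q : Λ → ℝ) (f : Λ → X → A) (g : Λ → Y → B),
    (∀ l ∈ s, 0 ≤ q l) ∧ (∑ l ∈ s, q l = 1) ∧
    ∀ a b x y, P a b x y =
      ∑ l ∈ s, q l * (if a = f l x then 1 else 0) * (if b = g l y then 1 else 0)

/-- A box vanishes on a set of (output, output, input, input) quadruples. -/
def VanishesOn {A B X Y : Type*} (P : A → B → X → Y → ℝ)
    (S0 : Finset (A × B × X × Y)) : Prop :=
  ∀ t ∈ S0, P t.1 t.2.1 t.2.2.1 t.2.2.2 = 0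

lemma sum_prod_indicator {B Y : Type*} [Fintype B] [Fintype Y] [DecidableEq Y] [DecidableEq B]
    (c : Y → B → ℝ) (hc : ∀ y, ∑ b, c y b = 1) (b : B) (y : Y) :
    ∑ g : Y → B, (∏ y', c y' (g y')) * (if b = g y then 1 else 0) = c y b := by
  have h1 : ∀ g : Y → B, (∏ y', c y' (g y')) * (if b = g y then 1 else 0)
      = ∏ y', (c y' (g y') * (if y' = y then (if b = g y' then 1 else 0) else 1)) := by
    intro g
    rw [Finset.prod_mul_distrib]
    congr 1
    simp
  simp_rw [h1]
  rw [← Fintype.prod_sum (fun y' b' => c y' b' * (if y' = y then (if b = b' then 1 else 0) else 1))]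
  rw [Finset.prod_eq_single y]
  · simp
  · intro y' _ hy'
    simp [hy', hc]
  · simp

/-- A no-signaling box with binary inputs for Alice in which one of Alice's
inputs gives a deterministic outcome must be local. -/
theorem noSignaling_deterministic_marginal_local
    {A B Y : Type*} [Fintype A] [Fintype B] [Fintype Y]
    [DecidableEq A] [DecidableEq B]
    (hY : 2 ≤ Fintype.card Y)
    (P : A → B → Fin 2 → Y → ℝ)
    (hbox : IsBox P) (hns : NoSignaling P)
    (a0 : A) (hdet : ∀ y, ∑ b, P a0 b 0 y = 1) :
    IsLocal P := by
  classical
  obtain ⟨hpos, hnorm⟩ := hbox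
  obtain ⟨hA, hB⟩ := hns
  have hcard : 0 < Fintype.card Y := by omega
  obtain ⟨y0⟩ : Nonempty Y := Fintype.card_pos_iff.mp hcard
  let m : A → ℝ := fun a => ∑ b, P a b 1 y0
  have hm : ∀ a y, ∑ b, P a b 1 y = m a := fun a y => hA a 1 y y0
  have hm0 : ∀ a, 0 ≤ m a := fun a => Finset.sum_nonneg fun b _ => hpos a b 1 y0
  let q : A × (Y → B) → ℝ := fun l => m l.1 * ∏ y, (P l.1 (l.2 y) 1 y / m l.1)
  have key : ∀ a b y, ∑ g : Y → B, q (a, g) * (if b = g y then 1 else 0) = P a b 1 y := by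
    intro a b y
    by_cases h : m a = 0
    · have h2 := hm a y
      rw [h, Finset.sum_eq_zero_iff_of_nonneg (fun b _ => hpos a b 1 y)] at h2
      rw [h2 b (Finset.mem_univ b)]
      simp [q, h]
    · have h3 := sum_prod_indicator (fun y b => P a b 1 y / m a)
        (fun y => by rw [← Finset.sum_div, hm, div_self h]) b y
      simp only [q, mul_assoc]
      rw [← Finset.mul_sum, h3]
      field_simp
  have qsum : ∑ l, q l = 1 := by
    rw [← hnorm 1 y0, Fintype.sum_prod_type]
    refine Finset.sum_congr rfl fun a _ => ?_
    simp_rw [← key a _ y0]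
    rw [Finset.sum_comm]
    refine Finset.sum_congr rfl fun g _ => ?_
    simp
  have hz : ∀ a b y, a ≠ a0 → P a b 0 y = 0 := by
    intro a b y hne
    have h4 := hnorm 0 y
    rw [← Finset.add_sum_erase _ _ (Finset.mem_univ a0), hdet y] at h4
    have h5 : ∑ a ∈ Finset.univ.erase a0, ∑ b, P a b 0 y = 0 := by linarith
    rw [Finset.sum_eq_zero_iff_of_nonneg
      (fun a _ => Finset.sum_nonneg fun b _ => hpos a b 0 y)] at h5
    have h6 := h5 a (by simp [hne])
    rw [Finset.sum_eq_zero_iff_of_nonneg (fun b _ => hpos a b 0 y)] at h6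
    exact h6 b (Finset.mem_univ b)
  let e := (Fintype.equivFin (A × (Y → B))).symm
  refine ⟨Fin (Fintype.card (A × (Y → B))), Finset.univ, fun l => q (e l),
    fun l x => if x = 0 then a0 else (e l).1, fun l => (e l).2, ?_, ?_, ?_⟩
  · intro l _
    exact mul_nonneg (hm0 _) (Finset.prod_nonneg fun y _ => div_nonneg (hpos _ _ _ _) (hm0 _))
  · rw [← qsum]
    exact e.sum_comp q
  · intro a b x y
    rw [e.sum_comp (fun l => q l * (if a = (if x = 0 then a0 else l.1) then 1 else 0) *
      (if b = l.2 y then 1 else 0)), Fintype.sum_prod_type]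
    have h7 : ∀ a', ∑ g : Y → B, q (a', g) * (if a = (if x = 0 then a0 else a') then 1 else 0) *
      (if b = g y then 1 else 0) = (if a = (if x = 0 then a0 else a') then 1 else 0) * P a' b 1 y := by
      intro a'
      rw [← key a' b y, Finset.mul_sum]
      exact Finset.sum_congr rfl fun g _ => by ring
    simp only [h7]
    fin_cases x
    · simp only [Fin.zero_eta, if_true]
      rw [← Finset.mul_sum, hB b y 1 0, Finset.sum_eq_single a0 (fun a _ h => hz a b y h) (by simp)]
      by_cases h : a = a0
      · simp [h]
      · simp [h, hz a b y h]
    · simp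
end

section
/- Consider a two-party Bell scenario with Alice input set of size 2, Bob input set of size n ≥ 2, and arbitrary finite output sets. Let (a_H, b_H, x_H, y_H) be a distinguished quadruple and let S_0 be a Hardy frame for it, i.e. a set of quadruples such that every local box vanishing on S_0 satisfies P(a_H,b_H|x_H,y_H) = 0. Then every no-signaling box vanishing on S_0 satisfies P(a_H,b_H|x_H,y_H) ≤ (n−1)/n. Moreover the bound is tight: for every n ≥ 2 there exist such a scenario (with n outputs per party), a Hardy frame S_0, and a no-signaling box vanishing on S_0 with P(a_H,b_H|x_H,y_H) = (n−1)/n. -/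
lemma hardy_hit {A B Y : Type} [Fintype A] [Fintype B] [Fintype Y]
    [DecidableEq A] [DecidableEq B] (aH : A) (bH : B) (xH : Fin 2) (yH : Y)
    (S0 : Finset (A × B × Fin 2 × Y))
    (h : ∀ Q : A → B → Fin 2 → Y → ℝ,
          IsBox Q → IsLocal Q → VanishesOn Q S0 → Q aH bH xH yH = 0)
    (f : Fin 2 → A) (g : Y → B) (hf : f xH = aH) (hg : g yH = bH) :
    ∃ x y, (f x, g y, x, y) ∈ S0 := by
  by_contra hc
  push Not at hc
  have := h (fun a b x y => (if a = f x then 1 else 0) * (if b = g y then 1 else 0)) ?_ ?_ ?_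
  · simp [hf, hg] at this
  · refine ⟨fun a b x y => by positivity, fun x y => ?_⟩
    simp
  · exact ⟨Unit, {()}, fun _ => 1, fun _ => f, fun _ => g, by simp, by simp, by simp⟩
  · rintro ⟨a, b, x, y⟩ ht
    by_cases h1 : a = f x
    · by_cases h2 : b = g y
      · subst h1 h2
        exact absurd ht (hc x y)
      · simp [h2]
    · simp [h1]

lemma hardy_block {A B Y : Type} [Fintype A] [Fintype B] [Fintype Y]
    [DecidableEq A] [DecidableEq B] (aH : A) (bH : B) (xH x' : Fin 2) (yH : Y)
    (S0 : Finset (A × B × Fin 2 × Y))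
    (P : A → B → Fin 2 → Y → ℝ) (hP : IsBox P) (hN : NoSignaling P) (hV : VanishesOn P S0)
    (y : Y) (T : Finset A)
    (hT : ∀ a ∈ T, ∀ b, (y = yH → b = bH) → (aH, b, xH, y) ∈ S0 ∨ (a, b, x', y) ∈ S0) :
    ∑ a ∈ T, ∑ b, P a b x' y ≤ 1 - P aH bH xH yH := by
  classical
  obtain ⟨hpos, hsum⟩ := hP
  obtain ⟨hA, hB⟩ := hN
  let C : Finset B := Finset.univ.filter fun b => (y = yH → b = bH) ∧ (aH, b, xH, y) ∉ S0
  have h1 : ∑ a ∈ T, ∑ b, P a b x' y = ∑ a ∈ T, ∑ b ∈ Cᶜ, P a b x' y := by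
    refine Finset.sum_congr rfl fun a ha => ?_
    symm
    refine Finset.sum_subset (Finset.subset_univ _) fun b _ hb => ?_
    have hb' : b ∈ C := by simpa using hb
    simp only [C, Finset.mem_filter, Finset.mem_univ, true_and] at hb'
    rcases hT a ha b hb'.1 with h | h
    · exact absurd h hb'.2
    · exact hV _ h
  have h2 : ∑ a ∈ T, ∑ b ∈ Cᶜ, P a b x' y ≤ ∑ a, ∑ b ∈ Cᶜ, P a b x' y :=
    Finset.sum_le_sum_of_subset_of_nonneg (Finset.subset_univ _)
      fun a _ _ => Finset.sum_nonneg fun b _ => hpos _ _ _ _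
  have h3 : ∑ a, ∑ b ∈ Cᶜ, P a b x' y = ∑ b ∈ Cᶜ, ∑ a, P a b xH y := by
    rw [Finset.sum_comm]
    exact Finset.sum_congr rfl fun b _ => hB b y x' xH
  have h4 : ∑ b ∈ C, ∑ a, P a b xH y + ∑ b ∈ Cᶜ, ∑ a, P a b xH y = 1 := by
    rw [Finset.sum_add_sum_compl, Finset.sum_comm]
    exact hsum xH y
  have h5 : ∑ b ∈ C, P aH b xH y ≤ ∑ b ∈ C, ∑ a, P a b xH y :=
    Finset.sum_le_sum fun b _ => Finset.single_le_sum (f := fun a => P a b xH y)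
      (fun a _ => hpos _ _ _ _) (Finset.mem_univ aH)
  have h6 : P aH bH xH yH ≤ ∑ b ∈ C, P aH b xH y := by
    by_cases hy : y = yH
    · subst hy
      by_cases hm : (aH, bH, xH, y) ∈ S0
      · have := hV _ hm
        simp only at this
        rw [this]
        exact Finset.sum_nonneg fun b _ => hpos _ _ _ _
      · exact Finset.single_le_sum (f := fun b => P aH b xH y)
          (fun a _ => hpos _ _ _ _) (by simp [C, hm])
    · have e : ∑ b ∈ C, P aH b xH y = ∑ b, P aH b xH y := by
        refine Finset.sum_subset (Finset.subset_univ _) fun b _ hb => ?_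
        have : (aH, b, xH, y) ∈ S0 := by
          by_contra hm
          exact hb (by simp [C, hm, hy])
        exact hV _ this
      rw [e, hA aH xH y yH]
      exact Finset.single_le_sum (f := fun b => P aH b xH yH)
          (fun a _ => hpos _ _ _ _) (Finset.mem_univ bH)
  linarith

lemma hardy_upper {A B Y : Type} [Fintype A] [Fintype B] [Fintype Y]
    [DecidableEq A] [DecidableEq B] (n : ℕ) (hn : 2 ≤ n) (hc : Fintype.card Y = n)
    (aH : A) (bH : B) (xH : Fin 2) (yH : Y)
    (S0 : Finset (A × B × Fin 2 × Y))
    (h : ∀ Q : A → B → Fin 2 → Y → ℝ,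
          IsBox Q → IsLocal Q → VanishesOn Q S0 → Q aH bH xH yH = 0)
    (P : A → B → Fin 2 → Y → ℝ) (hP : IsBox P) (hN : NoSignaling P) (hV : VanishesOn P S0) :
    P aH bH xH yH ≤ ((n : ℝ) - 1) / n := by
  letI : DecidableEq Y := Classical.decEq Y
  obtain ⟨x', hx', hx⟩ : ∃ x' : Fin 2, x' ≠ xH ∧ ∀ x, x = xH ∨ x = x' := by
    have : ∀ z : Fin 2, ∃ x' : Fin 2, x' ≠ z ∧ ∀ x, x = z ∨ x = x' := by decide
    exact this xH
  have key : ∀ a', ∃ y, ∀ b, (y = yH → b = bH) →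
      (aH, b, xH, y) ∈ S0 ∨ (a', b, x', y) ∈ S0 := by
    intro a'
    by_contra hcon
    push Not at hcon
    choose g hg1 hg2 hg3 using hcon
    obtain ⟨x, y, hxy⟩ := hardy_hit aH bH xH yH S0 h (fun x => if x = xH then aH else a') g
      (by simp) (hg1 yH rfl)
    rcases hx x with rfl | rfl
    · simp [hg2] at hxy
    · simp [hx', hg3] at hxy
  choose F hF using key
  have h1 : ∑ y, ∑ a ∈ Finset.univ.filter (fun a => F a = y), ∑ b, P a b x' yH = 1 := by
    rw [Finset.sum_fiberwise]
    exact hP.2 x' yH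
  have h2 : ∑ y : Y, ∑ a ∈ Finset.univ.filter (fun a => F a = y), ∑ b, P a b x' yH
      ≤ ∑ y : Y, (1 - P aH bH xH yH) := by
    refine Finset.sum_le_sum fun y _ => ?_
    rw [Finset.sum_congr rfl fun a _ => hN.1 a x' yH y]
    refine hardy_block aH bH xH x' yH S0 P hP hN hV y _ fun a ha b hb => ?_
    simp only [Finset.mem_filter, Finset.mem_univ, true_and] at ha
    subst ha
    exact hF a b hb
  rw [h1] at h2
  simp only [Finset.sum_const, Finset.card_univ, hc, nsmul_eq_mul] at h2
  have hn' : (0 : ℝ) < n := by positivity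
  rw [le_div_iff₀ hn']
  linarith

lemma hardy_tight (m : ℕ) :
    ∃ (aH bH : Fin (m+2)) (xH : Fin 2) (yH : Fin (m+2))
        (S0 : Finset (Fin (m+2) × Fin (m+2) × Fin 2 × Fin (m+2))),
        (∀ Q : Fin (m+2) → Fin (m+2) → Fin 2 → Fin (m+2) → ℝ,
          IsBox Q → IsLocal Q → VanishesOn Q S0 → Q aH bH xH yH = 0) ∧
        ∃ P : Fin (m+2) → Fin (m+2) → Fin 2 → Fin (m+2) → ℝ,
          IsBox P ∧ NoSignaling P ∧ VanishesOn P S0 ∧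
          P aH bH xH yH = (((m+2 : ℕ) : ℝ) - 1) / (m+2 : ℕ) := by
  classical
  refine ⟨0, 0, 0, 0, Finset.univ.filter fun t =>
    (t.2.2.1 = 0 ∧ t.1 ≠ t.2.1) ∨
    (t.2.2.1 = 1 ∧ t.2.1 ≠ if t.1 = t.2.2.2 then 1 else 0), ?_, ?_⟩
  · rintro Q - ⟨Λ, s, q, f, g, hq, -, hQ⟩ hV
    rw [hQ]
    refine Finset.sum_eq_zero fun l hl => ?_
    by_cases h0 : q l = 0
    · simp [h0]
    have hl0 : 0 < q l := lt_of_le_of_ne (hq l hl) (Ne.symm h0)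
    have hpos : ∀ x y, Q (f l x) (g l y) x y ≠ 0 := by
      intro x y
      rw [hQ]
      have := Finset.single_le_sum (f := fun l' => q l' * (if f l x = f l' x then 1 else 0) *
        (if g l y = g l' y then 1 else 0)) (fun i hi => by
          have := hq i hi
          positivity) hl
      simp only [if_true, mul_one] at this
      linarith
    have e0 : ∀ y, f l 0 = g l y := by
      intro y
      by_contra hne
      exact hpos 0 y (hV (f l 0, g l y, 0, y) (by simp [hne]))
    have e1 : g l (f l 1) = 1 := by
      by_contra hne
      exact hpos 1 (f l 1) (hV (f l 1, g l (f l 1), 1, f l 1) (by simp [hne]))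
    have e2 : f l 0 = 1 := (e0 _).trans e1
    simp [e2]
  · set N : ℝ := ((m+2 : ℕ) : ℝ) with hN
    have hNpos : 0 < N := by rw [hN]; positivity
    have hN1 : 1 ≤ N := by rw [hN]; push_cast; linarith [Nat.cast_nonneg (α := ℝ) m]
    let w : Fin (m+2) → ℝ := fun a => (if a = 0 then (N-1)/N else 0) + (if a = 1 then 1/N else 0)
    have hw : ∀ a, 0 ≤ w a := fun a => by
      have : 0 ≤ (N-1)/N := div_nonneg (by linarith) hNpos.le
      simp only [w]; positivity
    have hws : ∑ a, w a = 1 := by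
      simp only [w, Finset.sum_add_distrib, Finset.sum_ite_eq', Finset.mem_univ, if_true]
      field_simp; ring
    have hm : ∀ b y : Fin (m+2),
        ∑ a, (if b = (if a = y then 1 else 0) then 1/N else 0) = w b := by
      intro b y
      have hcard : ∑ a : Fin (m+2), (if a = y then 0 else 1/N) = (N-1)/N := by
        have : ∀ a : Fin (m+2), (if a = y then 0 else 1/N) = 1/N - (if a = y then 1/N else 0) := by
          intro a; split_ifs <;> simp
        rw [Finset.sum_congr rfl fun a _ => this a, Finset.sum_sub_distrib]
        simp only [Finset.sum_const, Finset.card_univ, Fintype.card_fin, Finset.sum_ite_eq',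
          Finset.mem_univ, if_true, nsmul_eq_mul, ← hN]
        field_simp
      by_cases hb0 : b = 0
      · subst hb0
        simp only [w]
        rw [if_pos trivial, if_neg (by simp), add_zero, ← hcard]
        refine Finset.sum_congr rfl fun a _ => ?_
        by_cases h : a = y <;> simp [h]
      · by_cases hb1 : b = 1
        · subst hb1
          simp only [w]
          rw [if_neg (by simp), if_pos trivial, zero_add]
          rw [show (1/N : ℝ) = ∑ a : Fin (m+2), (if a = y then 1/N else 0) by simp]
          refine Finset.sum_congr rfl fun a _ => ?_
          by_cases h : a = y <;> simp [h]
        · simp only [w, hb0, hb1, if_false, add_zero]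
          refine Finset.sum_eq_zero fun a _ => ?_
          by_cases h : a = y <;> simp [h, hb0, hb1]
    let P : Fin (m+2) → Fin (m+2) → Fin 2 → Fin (m+2) → ℝ := fun a b x y =>
      if x = 0 then (if a = b then w a else 0)
      else (if b = (if a = y then 1 else 0) then 1/N else 0)
    have hA0 : ∀ a y, ∑ b, P a b 0 y = w a := by intro a y; simp [P]
    have hA1 : ∀ a y, ∑ b, P a b 1 y = 1/N := by intro a y; simp [P]
    have hB0 : ∀ b y, ∑ a, P a b 0 y = w b := by intro a y; simp [P]
    have hB1 : ∀ b y, ∑ a, P a b 1 y = w b := by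
      intro b y
      rw [← hm b y]
      simp [P]
    refine ⟨P, ⟨?_, ?_⟩, ⟨?_, ?_⟩, ?_, ?_⟩
    · intro a b x y
      have := hw a
      simp only [P]
      positivity
    · intro x y
      rw [Finset.sum_comm]
      fin_cases x
      · simp only [Fin.zero_eta, Fin.mk_one, hB0, hws]
      · simp only [Fin.zero_eta, Fin.mk_one, hB1, hws]
    · intro a x y y'
      fin_cases x
      · simp only [Fin.zero_eta, Fin.mk_one, hA0]
      · simp only [Fin.zero_eta, Fin.mk_one, hA1]
    · have : ∀ b y x, ∑ a, P a b x y = w b := by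
        intro b y x
        fin_cases x
        · exact hB0 b y
        · exact hB1 b y
      intro b y x x'
      rw [this, this]
    · rintro ⟨a, b, x, y⟩ ht
      simp only [Finset.mem_filter, Finset.mem_univ, true_and] at ht
      rcases ht with ⟨rfl, h⟩ | ⟨rfl, h⟩
      · simp [P, h]
      · simp [P, h]
    · simp [P, w]

/-- Any no-signaling box compatible with a `2 × n` Hardy frame has Hardy output
probability at most `(n−1)/n`, and this bound is tight. -/
theorem hardy_2xn_noiseless_bound :
    (∀ (A B Y : Type) (_ : Fintype A) (_ : Fintype B) (_ : Fintype Y)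
      (_ : DecidableEq A) (_ : DecidableEq B) (n : ℕ), 2 ≤ n →
      Fintype.card Y = n →
      ∀ (aH : A) (bH : B) (xH : Fin 2) (yH : Y)
        (S0 : Finset (A × B × Fin 2 × Y)),
        (∀ Q : A → B → Fin 2 → Y → ℝ,
          IsBox Q → IsLocal Q → VanishesOn Q S0 → Q aH bH xH yH = 0) →
        ∀ P : A → B → Fin 2 → Y → ℝ,
          IsBox P → NoSignaling P → VanishesOn P S0 →
          P aH bH xH yH ≤ ((n : ℝ) - 1) / n) ∧
    (∀ n : ℕ, 2 ≤ n →
      ∃ (aH bH : Fin n) (xH : Fin 2) (yH : Fin n)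
        (S0 : Finset (Fin n × Fin n × Fin 2 × Fin n)),
        (∀ Q : Fin n → Fin n → Fin 2 → Fin n → ℝ,
          IsBox Q → IsLocal Q → VanishesOn Q S0 → Q aH bH xH yH = 0) ∧
        ∃ P : Fin n → Fin n → Fin 2 → Fin n → ℝ,
          IsBox P ∧ NoSignaling P ∧ VanishesOn P S0 ∧
          P aH bH xH yH = ((n : ℝ) - 1) / n) := by
  refine ⟨?_, ?_⟩
  · intro A B Y _ _ _ _ _ n hn hc aH bH xH yH S0 h P hP hN hV
    exact hardy_upper n hn hc aH bH xH yH S0 h P hP hN hV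
  · intro n hn
    obtain ⟨m, rfl⟩ : ∃ m, n = m + 2 := ⟨n - 2, by omega⟩
    exact hardy_tight m
end

section
/- Consider a two-party Bell scenario with Alice input set of size 2, Bob input set of size n ≥ 2, and arbitrary finite output sets. Let (a_H, b_H, x_H, y_H) be a distinguished quadruple and let S_0 be a Hardy frame for it, i.e. a set of quadruples such that every local box vanishing on S_0 satisfies P(a_H,b_H|x_H,y_H) = 0. Then every no-signaling box P satisfies P(a_H,b_H|x_H,y_H) ≤ (n−1)/n + z_H/n, where z_H = Σ_{(a,b,x,y)∈S_0} P(a,b|x,y). Moreover the bound is tight: for every n ≥ 2 and every z ∈ [0,1] there exist such a scenario, a Hardy frame S_0, and a no-signaling box with Σ_{(a,b,x,y)∈S_0} P(a,b|x,y) = z and P(a_H,b_H|x_H,y_H) = (n−1)/n + z/n. -/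
lemma sum_swap3 {A B Y : Type} [Fintype A] [Fintype B] [Fintype Y] (h : A → B → Y → ℝ) :
    ∑ a, ∑ b, ∑ y, h a b y = ∑ y, ∑ b, ∑ a, h a b y := by
  have e : ∀ a, ∑ b, ∑ y, h a b y = ∑ y, ∑ b, h a b y := fun a => Finset.sum_comm
  rw [Finset.sum_congr rfl fun a _ => e a, Finset.sum_comm]
  exact Finset.sum_congr rfl fun y _ => Finset.sum_comm

open Finset in
lemma frame_det {A B Y : Type} [Fintype A] [Fintype B] [DecidableEq A] [DecidableEq B]
    (aH : A) (bH : B) (xH : Fin 2) (yH : Y) (S0 : Finset (A × B × Fin 2 × Y))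
    (hS : ∀ Q : A → B → Fin 2 → Y → ℝ,
          IsBox Q → IsLocal Q → VanishesOn Q S0 → Q aH bH xH yH = 0)
    (f : Fin 2 → A) (g : Y → B) (hf : f xH = aH) (hg : g yH = bH) :
    ∃ x y, (f x, g y, x, y) ∈ S0 := by
  by_contra hcon
  push Not at hcon
  have := hS (fun a b x y => (if a = f x then 1 else 0) * (if b = g y then 1 else 0)) ?_ ?_ ?_
  · simp [hf, hg] at this
  · refine ⟨fun a b x y => by positivity, fun x y => ?_⟩
    simp
  · refine ⟨Unit, {()}, fun _ => 1, fun _ => f, fun _ => g, by simp, by simp, ?_⟩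
    intro a b x y
    simp
  · rintro ⟨a, b, x, y⟩ ht
    by_cases h1 : a = f x
    · by_cases h2 : b = g y
      · subst h1 h2
        exact absurd ht (hcon x y)
      · simp [h2]
    · simp [h1]

lemma upper_part (A B Y : Type) [Fintype A] [Fintype B] [Fintype Y]
    [DecidableEq A] [DecidableEq B] (n : ℕ) (hn : 2 ≤ n) (hY : Fintype.card Y = n)
    (aH : A) (bH : B) (xH : Fin 2) (yH : Y) (S0 : Finset (A × B × Fin 2 × Y))
    (hS : ∀ Q : A → B → Fin 2 → Y → ℝ,
          IsBox Q → IsLocal Q → VanishesOn Q S0 → Q aH bH xH yH = 0)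
    (P : A → B → Fin 2 → Y → ℝ) (hP : IsBox P) (hN : NoSignaling P) :
    P aH bH xH yH ≤ ((n : ℝ) - 1) / n +
            (∑ t ∈ S0, P t.1 t.2.1 t.2.2.1 t.2.2.2) / n := by
  classical
  obtain ⟨h0, h1⟩ := hP
  obtain ⟨hA, hB⟩ := hN
  have hn0 : (0:ℝ) < n := by positivity
  rw [← add_div, le_div_iff₀ hn0]
  have hrowle : ∀ a x y b, P a b x y ≤ ∑ b, P a b x y := fun a x y b =>
    Finset.single_le_sum (f := fun b => P a b x y) (fun b _ => h0 a b x y) (Finset.mem_univ b)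
  have hcolle : ∀ a x y b, P a b x y ≤ ∑ a, P a b x y := fun a x y b =>
    Finset.single_le_sum (f := fun a => P a b x y) (fun a _ => h0 a b x y) (Finset.mem_univ a)
  have hp1 : P aH bH xH yH ≤ 1 := by
    rw [← h1 xH yH]
    exact (hrowle _ _ _ _).trans (Finset.single_le_sum (f := fun a => ∑ b, P a b xH yH)
      (fun a _ => Finset.sum_nonneg fun b _ => h0 a b xH yH) (Finset.mem_univ aH))
  by_cases hH : (aH, bH, xH, yH) ∈ S0
  · have hz : P aH bH xH yH ≤ ∑ t ∈ S0, P t.1 t.2.1 t.2.2.1 t.2.2.2 :=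
      Finset.single_le_sum (f := fun t : A × B × Fin 2 × Y => P t.1 t.2.1 t.2.2.1 t.2.2.2)
        (fun t _ => h0 _ _ _ _) hH
    have : (1:ℝ) ≤ n := by exact_mod_cast (by omega : 1 ≤ n)
    nlinarith
  obtain ⟨x', hx', hx2⟩ : ∃ x' : Fin 2, x' ≠ xH ∧ ∀ h : Fin 2 → ℝ, ∑ x, h x = h xH + h x' := by
    refine ⟨1 - xH, ?_, ?_⟩
    · clear * -; revert xH; decide
    · intro h
      fin_cases xH <;> simp [Fin.sum_univ_two, add_comm]
  set s : A → B → Fin 2 → Y → ℝ := fun a b x y => if (a,b,x,y) ∈ S0 then P a b x y else 0 with hs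
  have hs0 : ∀ a b x y, 0 ≤ s a b x y := fun a b x y => by
    simp only [hs]; split_ifs; exacts [h0 _ _ _ _, le_rfl]
  have hz : ∑ t ∈ S0, P t.1 t.2.1 t.2.2.1 t.2.2.2 =
      ∑ y, ((∑ b, ∑ a, s a b xH y) + ∑ b, ∑ a, s a b x' y) := by
    have e1 : ∑ t ∈ S0, P t.1 t.2.1 t.2.2.1 t.2.2.2 = ∑ t : A × B × Fin 2 × Y,
        s t.1 t.2.1 t.2.2.1 t.2.2.2 := by
      simp only [hs]
      rw [← Finset.sum_filter]
      simp
    rw [e1]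
    simp only [Fintype.sum_prod_type]
    simp only [hx2, Finset.sum_add_distrib]
    rw [sum_swap3 fun a b y => s a b xH y, sum_swap3 fun a b y => s a b x' y]
  -- choice of y for each a
  have key : ∀ a : A, ∃ y : Y, ∀ b : B, (y = yH → b = bH) →
      (aH, b, xH, y) ∈ S0 ∨ (a, b, x', y) ∈ S0 := by
    intro a
    by_contra hcon
    push Not at hcon
    choose g hg using hcon
    obtain ⟨x, y, hxy⟩ := frame_det aH bH xH yH S0 hS (fun x => if x = xH then aH else a) g
      (by simp) ((hg yH).1 rfl)
    by_cases hx : x = xH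
    · subst hx
      simp only [if_true] at hxy
      exact (hg y).2.1 hxy
    · have : x = x' := by
        revert x x' xH; clear * -; intros; omega
      subst this
      simp only [hx, if_false] at hxy
      exact (hg y).2.2 hxy
  choose φ hφ using key
  have hy : ∀ y, ∑ a with φ a = y, ∑ b, P a b x' y ≤
      (1 - P aH bH xH yH) + ((∑ b, ∑ a, s a b xH y) + ∑ b, ∑ a, s a b x' y) := by
    intro y
    have hnn : ∀ b x, 0 ≤ ∑ a, s a b x y := fun b x => Finset.sum_nonneg fun a _ => hs0 a b x y
    have hsub : ∀ b, ∑ a with φ a = y, P a b x' y ≤ ∑ a, P a b xH y := by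
      intro b
      rw [hB b y xH x']
      exact Finset.sum_le_sum_of_subset_of_nonneg (Finset.filter_subset _ _) fun a _ _ => h0 _ _ _ _
    have hins : ∀ b, (∀ a, φ a = y → (a, b, x', y) ∈ S0) →
        ∑ a with φ a = y, P a b x' y ≤ ∑ a, s a b x' y := by
      intro b hb
      calc ∑ a with φ a = y, P a b x' y = ∑ a with φ a = y, s a b x' y := by
            apply Finset.sum_congr rfl
            intro a ha
            simp only [Finset.mem_filter, Finset.mem_univ, true_and] at ha
            simp [hs, hb a ha]
        _ ≤ _ := Finset.sum_le_sum_of_subset_of_nonneg (Finset.filter_subset _ _)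
              fun a _ _ => hs0 _ _ _ _
    have hone : ∑ b, ∑ a, P a b xH y = 1 := by rw [Finset.sum_comm]; exact h1 xH y
    rw [Finset.sum_comm]
    by_cases hyy : y = yH
    · subst hyy
      have hb : ∀ b, ∑ a with φ a = y, P a b x' y ≤
          (∑ a, s a b x' y) + ((∑ a, P a b xH y) - if b = bH then P aH b xH y else 0) +
            ∑ a, s a b xH y - (if b = bH then (∑ a, P a b xH y) - P aH b xH y else 0) := by
        intro b
        by_cases hbb : b = bH
        · have := hins b (fun a ha => by
            subst ha
            have := hφ a b (fun _ => hbb)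
            subst hbb
            exact this.resolve_left hH)
          simp only [hbb, if_true] at this ⊢
          linarith [hnn bH xH]
        · simp only [hbb, if_false]
          linarith [hsub b, hnn b x', hnn b xH]
      refine (Finset.sum_le_sum fun b _ => hb b).trans ?_
      simp only [Finset.sum_add_distrib, Finset.sum_sub_distrib, hone, Finset.sum_ite_eq',
        Finset.mem_univ, if_true]
      linarith [hcolle aH xH y bH]
    · have hb : ∀ b, ∑ a with φ a = y, P a b x' y ≤
          (∑ a, s a b x' y) + ((∑ a, P a b xH y) - P aH b xH y) + ∑ a, s a b xH y := by
        intro b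
        by_cases hbb : (aH, b, xH, y) ∈ S0
        · have : P aH b xH y ≤ ∑ a, s a b xH y := by
            have := Finset.single_le_sum (f := fun a => s a b xH y) (fun a _ => hs0 a b xH y)
              (Finset.mem_univ aH)
            simpa [hs, hbb] using this
          linarith [hsub b, hnn b x']
        · have := hins b (fun a ha => by
            subst ha
            exact (hφ a b (fun h => absurd h hyy)).resolve_left hbb)
          linarith [hcolle aH xH y b, hnn b xH]
      refine (Finset.sum_le_sum fun b _ => hb b).trans ?_
      simp only [Finset.sum_add_distrib, Finset.sum_sub_distrib, hone]
      rw [hA aH xH y yH]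
      linarith [hrowle aH xH yH bH]
  have htot : ∑ y, ∑ a with φ a = y, ∑ b, P a b x' y = 1 := by
    rw [← h1 x' yH, ← Finset.sum_fiberwise (s := Finset.univ) (g := φ)]
    exact Finset.sum_congr rfl fun y _ => Finset.sum_congr rfl fun a _ => hA _ _ _ _
  have := Finset.sum_le_sum (s := Finset.univ) fun y _ => hy y
  rw [htot, Finset.sum_add_distrib, ← hz] at this
  simp only [Finset.sum_const, Finset.card_univ, hY, nsmul_eq_mul] at this
  linarith

lemma tight_part (m : ℕ) (z : ℝ) (hz0 : 0 ≤ z) (hz1 : z ≤ 1) :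
      ∃ (aH bH : Fin (m+2)) (xH : Fin 2) (yH : Fin (m+2))
        (S0 : Finset (Fin (m+2) × Fin (m+2) × Fin 2 × Fin (m+2))),
        (∀ Q : Fin (m+2) → Fin (m+2) → Fin 2 → Fin (m+2) → ℝ,
          IsBox Q → IsLocal Q → VanishesOn Q S0 → Q aH bH xH yH = 0) ∧
        ∃ P : Fin (m+2) → Fin (m+2) → Fin 2 → Fin (m+2) → ℝ,
          IsBox P ∧ NoSignaling P ∧
          (∑ t ∈ S0, P t.1 t.2.1 t.2.2.1 t.2.2.2) = z ∧
          P aH bH xH yH = (((m+2 : ℕ) : ℝ) - 1) / ((m+2 : ℕ) : ℝ) + z / ((m+2 : ℕ) : ℝ) := by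
  classical
  set N : ℝ := ((m+2 : ℕ) : ℝ) with hN
  have hN2 : 2 ≤ N := by rw [hN]; push_cast; linarith [(Nat.cast_nonneg m : (0:ℝ) ≤ m)]
  have hN0 : N ≠ 0 := by linarith
  let S0 : Finset (Fin (m+2) × Fin (m+2) × Fin 2 × Fin (m+2)) :=
    Finset.univ.filter fun t => (t.1 = 0 ∧ t.2.1 = 1 ∧ t.2.2.1 = 0) ∨
      (t.1 = t.2.2.2 ∧ t.2.1 ≠ 1 ∧ t.2.2.1 = 1)
  refine ⟨0, 0, 0, 0, S0, ?_, ?_⟩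
  · rintro Q - ⟨Λ, s, q, f, g, hq, -, hQ⟩ hv
    rw [hQ]
    apply Finset.sum_eq_zero
    intro l hl
    by_cases hf : (0 : Fin (m+2)) = f l 0
    swap
    · simp [hf]
    by_cases hg : (0 : Fin (m+2)) = g l 0
    swap
    · simp [hg]
    have : ∃ x y, (f l x, g l y, x, y) ∈ S0 := by
      by_cases h : g l (f l 1) = 1
      · exact ⟨0, f l 1, by simp [S0, h, ← hf]⟩
      · exact ⟨1, f l 1, by simp [S0, h]⟩
    obtain ⟨x, y, hxy⟩ := this
    have h0 := hv _ hxy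
    simp only [hQ] at h0
    rw [Finset.sum_eq_zero_iff_of_nonneg] at h0
    · have := h0 l hl
      simp at this
      simp [this]
    · intro i hi
      have := hq i hi
      positivity
  let w : Fin (m+2) → ℝ := fun b => ((N - 1) * (if b = 0 then 1 else 0) + (if b = 1 then 1 else 0)) / N
  have hw : ∀ b, 0 ≤ w b := fun b => by
    have : 0 ≤ N - 1 := by linarith
    have : 0 ≤ N := by linarith
    simp only [w]; positivity
  have hw1 : ∑ b, w b = 1 := by
    simp only [w]
    rw [← Finset.sum_div, Finset.sum_add_distrib, ← Finset.mul_sum]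
    simp [hN0]
  let P0 : Fin (m+2) → Fin (m+2) → Fin 2 → Fin (m+2) → ℝ := fun a b x y =>
    if x = 0 then (if a = b then w b else 0) else
      (if b = (if a = y then 1 else 0) then 1 / N else 0)
  let D : Fin (m+2) → Fin (m+2) → Fin 2 → Fin (m+2) → ℝ := fun a b x y =>
    if a = 0 then (if b = 0 then 1 else 0) else 0
  have hP0 : ∀ a b x y, 0 ≤ P0 a b x y := fun a b x y => by
    have := hw b
    have : 0 ≤ N := by linarith
    simp only [P0]; positivity
  have hD : ∀ a b x y, 0 ≤ D a b x y := fun a b x y => by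
    simp only [D]; positivity
  have hrow : ∀ a x y, ∑ b, P0 a b x y = if x = 0 then w a else 1 / N := by
    intro a x y
    by_cases hx : x = 0 <;> simp [P0, hx]
  have hcol : ∀ b x y, ∑ a, P0 a b x y = w b := by
    intro b x y
    by_cases hx : x = 0
    · simp [P0, hx]
    · simp only [P0, hx, if_false]
      have : ∀ a, (if b = (if a = y then 1 else 0) then 1 / N else 0) =
          (if b = 0 then 1 / N else 0) +
            (if a = y then (if b = 1 then 1 / N else 0) - (if b = 0 then 1 / N else 0) else 0) := by
        intro a
        by_cases h : a = y <;> simp [h]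
      simp only [this, Finset.sum_add_distrib, Finset.sum_const, Finset.sum_ite_eq',
        Finset.mem_univ, if_true, Finset.card_univ, Fintype.card_fin, nsmul_eq_mul, ← hN, w]
      split_ifs <;> field_simp <;> ring
  have hDrow : ∀ a x y, ∑ b, D a b x y = if a = 0 then 1 else 0 := by
    intro a x y
    by_cases h : a = 0 <;> simp [D, h]
  have hDcol : ∀ b x y, ∑ a, D a b x y = if b = 0 then 1 else 0 := by
    intro b x y
    simp [D]
  refine ⟨fun a b x y => z * D a b x y + (1 - z) * P0 a b x y, ⟨?_, ?_⟩, ⟨?_, ?_⟩, ?_, ?_⟩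
  · intro a b x y
    have := hD a b x y
    have := hP0 a b x y
    have : 0 ≤ 1 - z := by linarith
    positivity
  · intro x y
    rw [Finset.sum_comm]
    simp only [Finset.sum_add_distrib, ← Finset.mul_sum, hcol, hDcol, hw1]
    simp
  · intro a x y y'
    simp only [Finset.sum_add_distrib, ← Finset.mul_sum, hrow, hDrow]
  · intro a x y y'
    simp only [Finset.sum_add_distrib, ← Finset.mul_sum, hcol, hDcol]
  · rw [Finset.sum_eq_single_of_mem (0, 0, 1, 0)]
    · simp [D, P0]
    · simp [S0]
    · rintro ⟨a, b, x, y⟩ ht hne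
      simp only [S0, Finset.mem_filter, Finset.mem_univ, true_and] at ht
      rcases ht with ⟨rfl, rfl, rfl⟩ | ⟨rfl, hb, rfl⟩
      · simp [D, P0]
      · simp only [D, P0]
        have : a = 0 → b ≠ 0 := by
          rintro rfl rfl
          exact hne rfl
        by_cases ha : a = 0
        · simp [ha, hb, this ha]
        · simp [ha, hb]
  · simp [D, P0, w]
    field_simp
    ring

/-- Noisy version: any no-signaling box satisfies
`P(a_H,b_H|x_H,y_H) ≤ (n−1)/n + z_H/n` where `z_H` is the total weight on the
Hardy-frame zeros, and this bound is tight for every `z ∈ [0,1]`. -/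
theorem hardy_2xn_noisy_bound :
    (∀ (A B Y : Type) (_ : Fintype A) (_ : Fintype B) (_ : Fintype Y)
      (_ : DecidableEq A) (_ : DecidableEq B) (n : ℕ), 2 ≤ n →
      Fintype.card Y = n →
      ∀ (aH : A) (bH : B) (xH : Fin 2) (yH : Y)
        (S0 : Finset (A × B × Fin 2 × Y)),
        (∀ Q : A → B → Fin 2 → Y → ℝ,
          IsBox Q → IsLocal Q → VanishesOn Q S0 → Q aH bH xH yH = 0) →
        ∀ P : A → B → Fin 2 → Y → ℝ,
          IsBox P → NoSignaling P →
          P aH bH xH yH ≤ ((n : ℝ) - 1) / n +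
            (∑ t ∈ S0, P t.1 t.2.1 t.2.2.1 t.2.2.2) / n) ∧
    (∀ n : ℕ, 2 ≤ n → ∀ z : ℝ, 0 ≤ z → z ≤ 1 →
      ∃ (aH bH : Fin n) (xH : Fin 2) (yH : Fin n)
        (S0 : Finset (Fin n × Fin n × Fin 2 × Fin n)),
        (∀ Q : Fin n → Fin n → Fin 2 → Fin n → ℝ,
          IsBox Q → IsLocal Q → VanishesOn Q S0 → Q aH bH xH yH = 0) ∧
        ∃ P : Fin n → Fin n → Fin 2 → Fin n → ℝ,
          IsBox P ∧ NoSignaling P ∧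
          (∑ t ∈ S0, P t.1 t.2.1 t.2.2.1 t.2.2.2) = z ∧
          P aH bH xH yH = ((n : ℝ) - 1) / n + z / n) := by
  refine ⟨?_, ?_⟩
  · intro A B Y _ _ _ _ _ n hn hY aH bH xH yH S0 hS P hP hN
    exact upper_part A B Y n hn hY aH bH xH yH S0 hS P hP hN
  · intro n hn z hz0 hz1
    obtain ⟨m, rfl⟩ : ∃ m, n = m + 2 := ⟨n - 2, by omega⟩
    exact tight_part m z hz0 hz1
end

section
/- Consider a two-party Bell scenario with one party having input set of size 2 and the other party having input set of size n ≥ 2, with arbitrary finite output sets. Let (a_H, b_H, x_H, y_H) be a distinguished quadruple and let S_0 be a Hardy frame for it, i.e. a set of quadruples such that every local box vanishing on S_0 satisfies P(a_H,b_H|x_H,y_H) = 0. For a no-signaling box P define p_H = P(a_H,b_H|x_H,y_H), z_H = Σ_{(a,b,x,y)∈S_0} P(a,b|x,y), and B_H = p_H − z_H. Then B_H ≤ p_H ≤ 1 − B_H/(n−1) and z_H ≤ 1 − n·B_H/(n−1). -/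
theorem hardy_core {A B X Y : Type} [Fintype A] [Fintype B] [Fintype X] [Fintype Y]
    [DecidableEq A] [DecidableEq B] (hX : Fintype.card X = 2)
    (aH : A) (bH : B) (xH : X) (yH : Y) (S : A → B → X → Y → Prop)
    (hS : ∀ (f : X → A) (g : Y → B), f xH = aH → g yH = bH → ∃ x y, S (f x) (g y) x y)
    (P : A → B → X → Y → ℝ) (hbox : IsBox P) (hns : NoSignaling P)
    (w : A → B → X → Y → ℝ) (hw0 : ∀ a b x y, 0 ≤ w a b x y)
    (hw : ∀ a b x y, S a b x y → w a b x y = P a b x y) :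
    1 - (Fintype.card Y : ℝ) * (1 - P aH bH xH yH) ≤ ∑ y, ∑ b, ∑ x, ∑ a, w a b x y := by
  classical
  obtain ⟨hP, hN⟩ := hbox
  obtain ⟨hA, hB⟩ := hns
  obtain ⟨x1, hx1, hx1u⟩ : ∃ x1, x1 ≠ xH ∧ ∀ x, x = xH ∨ x = x1 := by
    have h := (Nat.card_eq_two_iff' xH).1 (by rw [Nat.card_eq_fintype_card, hX])
    obtain ⟨x1, h1, h2⟩ := h
    refine ⟨x1, h1, fun x => ?_⟩
    by_cases hx : x = xH
    · exact Or.inl hx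
    · exact Or.inr (h2 x hx)
  have key : ∀ a' : A, ∃ y, ∀ b, (y = yH → b = bH) → S aH b xH y ∨ S a' b x1 y := by
    intro a'
    by_contra! hcon
    choose g hg1 hg2 hg3 using hcon
    obtain ⟨x, y, hxy⟩ := hS (fun x => if x = xH then aH else a') g (by simp) (hg1 yH rfl)
    rcases hx1u x with rfl | rfl
    · simp only [if_true] at hxy
      exact hg2 y hxy
    · simp only [if_neg hx1] at hxy
      exact hg3 y hxy
  choose c hc using key
  have hxsum : ∀ F : X → ℝ, ∑ x, F x = F xH + F x1 := by
    intro F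
    have : (Finset.univ : Finset X) = {xH, x1} := by
      ext x; simpa using hx1u x
    rw [this, Finset.sum_pair hx1.symm]
  -- pointwise bound
  have hb : ∀ y b, (∑ a, if c a = y then P a b x1 y else 0) - (∑ a, P a b xH y)
      + (if (y = yH → b = bH) then P aH b xH y else 0) ≤ ∑ x, ∑ a, w a b x y := by
    intro y b
    rw [hxsum]
    have h1 : (∑ a, if c a = y then P a b x1 y else 0) ≤ ∑ a, P a b xH y := by
      rw [hB b y xH x1]
      refine Finset.sum_le_sum fun a _ => ?_
      split_ifs
      · exact le_rfl
      · exact hP _ _ _ _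
    have h2 : w aH b xH y ≤ ∑ a, w a b xH y :=
      Finset.single_le_sum (f := fun a => w a b xH y) (fun a _ => hw0 a b xH y) (Finset.mem_univ aH)
    have h3 : P aH b xH y ≤ ∑ a, P a b xH y :=
      Finset.single_le_sum (f := fun a => P a b xH y) (fun a _ => hP a b xH y) (Finset.mem_univ aH)
    have h4 : 0 ≤ ∑ a, w a b x1 y := Finset.sum_nonneg fun a _ => hw0 a b x1 y
    have h5 := hw0 aH b xH y
    by_cases hr : y = yH → b = bH
    · rw [if_pos hr]
      by_cases hT : S aH b xH y
      · rw [← hw _ _ _ _ hT]; linarith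
      · have : (∑ a, if c a = y then P a b x1 y else 0) ≤ ∑ a, w a b x1 y := by
          refine Finset.sum_le_sum fun a _ => ?_
          split_ifs with hca
          · have := hc a b (by rw [hca]; exact hr)
            rw [hca] at this
            rw [hw _ _ _ _ (this.resolve_left hT)]
          · exact hw0 _ _ _ _
        linarith
    · rw [if_neg hr]; linarith
  have hy : ∀ y, (∑ a, if c a = y then ∑ b, P a b x1 yH else 0) - (1 - P aH bH xH yH)
      ≤ ∑ b, ∑ x, ∑ a, w a b x y := by
    intro y
    refine le_trans ?_ (Finset.sum_le_sum fun b _ => hb y b)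
    rw [Finset.sum_add_distrib, Finset.sum_sub_distrib]
    have e1 : (∑ b, ∑ a, P a b xH y) = 1 := by rw [Finset.sum_comm]; exact hN xH y
    have e2 : (∑ b, ∑ a, if c a = y then P a b x1 y else 0)
        = ∑ a, if c a = y then ∑ b, P a b x1 yH else 0 := by
      rw [Finset.sum_comm]
      refine Finset.sum_congr rfl fun a _ => ?_
      split_ifs
      · exact hA a x1 y yH
      · simp
    have e3 : P aH bH xH yH ≤ ∑ b, if (y = yH → b = bH) then P aH b xH y else 0 := by
      by_cases hyy : y = yH
      · subst hyy; simp
      · simp only [hyy, false_imp_iff, if_true]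
        rw [hA aH xH y yH]
        exact Finset.single_le_sum (f := fun b => P aH b xH yH) (fun b _ => hP _ b _ _)
          (Finset.mem_univ bH)
    rw [e1, e2]; linarith
  refine le_trans ?_ (Finset.sum_le_sum fun y _ => hy y)
  rw [Finset.sum_sub_distrib, Finset.sum_comm]
  simp [hN]
  linarith

theorem hardy_perm1 {A B X Y : Type} [Fintype A] [Fintype B] [Fintype X] [Fintype Y]
    (F : A → B → X → Y → ℝ) :
    ∑ y, ∑ b, ∑ x, ∑ a, F a b x y = ∑ a, ∑ b, ∑ x, ∑ y, F a b x y := by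
  let e : Y × B × X × A ≃ A × B × X × Y :=
    ⟨fun t => (t.2.2.2, t.2.1, t.2.2.1, t.1), fun t => (t.2.2.2, t.2.1, t.2.2.1, t.1),
      fun _ => rfl, fun _ => rfl⟩
  have := Fintype.sum_equiv e (fun t => F t.2.2.2 t.2.1 t.2.2.1 t.1)
    (fun t => F t.1 t.2.1 t.2.2.1 t.2.2.2) (fun _ => rfl)
  simpa only [Fintype.sum_prod_type] using this

theorem hardy_perm2 {A B X Y : Type} [Fintype A] [Fintype B] [Fintype X] [Fintype Y]
    (F : A → B → X → Y → ℝ) :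
    ∑ x, ∑ a, ∑ y, ∑ b, F a b x y = ∑ a, ∑ b, ∑ x, ∑ y, F a b x y := by
  let e : X × A × Y × B ≃ A × B × X × Y :=
    ⟨fun t => (t.2.1, t.2.2.2, t.1, t.2.2.1), fun t => (t.2.2.1, t.1, t.2.2.2, t.2.1),
      fun _ => rfl, fun _ => rfl⟩
  have := Fintype.sum_equiv e (fun t => F t.2.1 t.2.2.2 t.1 t.2.2.1)
    (fun t => F t.1 t.2.1 t.2.2.1 t.2.2.2) (fun _ => rfl)
  simpa only [Fintype.sum_prod_type] using this

theorem hardy_det {A B X Y : Type} [Fintype A] [Fintype B]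
    [DecidableEq A] [DecidableEq B] (aH : A) (bH : B) (xH : X) (yH : Y)
    (S0 : Finset (A × B × X × Y))
    (hframe : ∀ Q : A → B → X → Y → ℝ,
      IsBox Q → IsLocal Q → VanishesOn Q S0 → Q aH bH xH yH = 0)
    (f : X → A) (g : Y → B) (hf : f xH = aH) (hg : g yH = bH) :
    ∃ x y, (f x, g y, x, y) ∈ S0 := by
  by_contra! hcon
  have := hframe (fun a b x y => (if a = f x then 1 else 0) * (if b = g y then 1 else 0))
    ⟨fun a b x y => by positivity, fun x y => by simp⟩
    ⟨Unit, {()}, fun _ => 1, fun _ => f, fun _ => g, by simp, by simp, by simp⟩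
    (by
      rintro ⟨a, b, x, y⟩ ht
      by_cases ha : a = f x
      · by_cases hb : b = g y
        · subst ha hb
          exact absurd ht (hcon x y)
        · simp [hb]
      · simp [ha])
  simp [hf, hg] at this

/-- For a Hardy frame in a scenario where one party has 2 inputs and the other
`n ≥ 2` inputs, every no-signaling box satisfies
`B_H ≤ p_H ≤ 1 − B_H/(n−1)` and `z_H ≤ 1 − n·B_H/(n−1)`. -/
theorem hardy_2xn_BH_bounds
    (A B X Y : Type) [Fintype A] [Fintype B] [Fintype X] [Fintype Y]
    [DecidableEq A] [DecidableEq B] (n : ℕ) (hn : 2 ≤ n)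
    (hcard : (Fintype.card X = 2 ∧ Fintype.card Y = n) ∨
             (Fintype.card X = n ∧ Fintype.card Y = 2))
    (aH : A) (bH : B) (xH : X) (yH : Y)
    (S0 : Finset (A × B × X × Y))
    (hframe : ∀ Q : A → B → X → Y → ℝ,
      IsBox Q → IsLocal Q → VanishesOn Q S0 → Q aH bH xH yH = 0)
    (P : A → B → X → Y → ℝ)
    (hbox : IsBox P) (hns : NoSignaling P) :
    (P aH bH xH yH - ∑ t ∈ S0, P t.1 t.2.1 t.2.2.1 t.2.2.2) ≤ P aH bH xH yH ∧
    P aH bH xH yH ≤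
      1 - (P aH bH xH yH - ∑ t ∈ S0, P t.1 t.2.1 t.2.2.1 t.2.2.2) / ((n : ℝ) - 1) ∧
    (∑ t ∈ S0, P t.1 t.2.1 t.2.2.1 t.2.2.2) ≤
      1 - (n : ℝ) * (P aH bH xH yH - ∑ t ∈ S0, P t.1 t.2.1 t.2.2.1 t.2.2.2) /
        ((n : ℝ) - 1) := by
  classical
  have hP := hbox.1
  have hz0 : 0 ≤ ∑ t ∈ S0, P t.1 t.2.1 t.2.2.1 t.2.2.2 :=
    Finset.sum_nonneg fun t _ => hP _ _ _ _
  have hdet := hardy_det aH bH xH yH S0 hframe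
  have hz : (∑ t ∈ S0, P t.1 t.2.1 t.2.2.1 t.2.2.2)
      = ∑ a, ∑ b, ∑ x, ∑ y, if (a, b, x, y) ∈ S0 then P a b x y else 0 := by
    have h : (∑ t ∈ S0, P t.1 t.2.1 t.2.2.1 t.2.2.2)
        = ∑ t : A × B × X × Y, if t ∈ S0 then P t.1 t.2.1 t.2.2.1 t.2.2.2 else 0 := by
      simp
    rw [h]
    simp only [Fintype.sum_prod_type]
  have main : 1 - (n : ℝ) * (1 - P aH bH xH yH) ≤ ∑ t ∈ S0, P t.1 t.2.1 t.2.2.1 t.2.2.2 := by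
    rw [hz]
    rcases hcard with ⟨h1, h2⟩ | ⟨h1, h2⟩
    · have := hardy_core h1 aH bH xH yH (fun a b x y => (a, b, x, y) ∈ S0) hdet P hbox hns
        (fun a b x y => if (a, b, x, y) ∈ S0 then P a b x y else 0)
        (fun a b x y => by
          split_ifs
          · exact hP _ _ _ _
          · exact le_rfl)
        (fun a b x y h => if_pos h)
      rw [h2] at this
      exact this.trans (le_of_eq (hardy_perm1 (fun a b x y => if (a, b, x, y) ∈ S0 then P a b x y else 0)))
    · have := hardy_core h2 bH aH yH xH (fun b a y x => (a, b, x, y) ∈ S0)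
        (fun g f hg hf => by
          obtain ⟨x, y, h⟩ := hdet f g hf hg
          exact ⟨y, x, h⟩)
        (fun b a y x => P a b x y)
        ⟨fun b a y x => hP a b x y, fun y x => by rw [Finset.sum_comm]; exact hbox.2 x y⟩
        ⟨fun b y x x' => hns.2 b y x x', fun a x y y' => hns.1 a x y y'⟩
        (fun b a y x => if (a, b, x, y) ∈ S0 then P a b x y else 0)
        (fun b a y x => by
          split_ifs
          · exact hP _ _ _ _
          · exact le_rfl)
        (fun b a y x h => if_pos h)
      rw [h1] at this
      exact this.trans (le_of_eq (hardy_perm2 (fun a b x y => if (a, b, x, y) ∈ S0 then P a b x y else 0)))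
  generalize (∑ t ∈ S0, P t.1 t.2.1 t.2.2.1 t.2.2.2) = z at *
  generalize P aH bH xH yH = p at *
  have hn' : (0 : ℝ) < (n : ℝ) - 1 := by
    have : (2 : ℝ) ≤ n := by exact_mod_cast hn
    linarith
  refine ⟨by linarith, ?_, ?_⟩
  · rw [le_sub_comm, div_le_iff₀ hn']
    nlinarith
  · rw [le_sub_comm, div_le_iff₀ hn']
    nlinarith
end

section
/- Every no-signaling (2,2,2) box satisfies B_CHSH ≥ 3 + 2·B_H, where B_CHSH = Σ_{(a,b,x,y) : a⊕b = x·y} P(a,b|x,y) is the CHSH expression (sum over all quadruples with a ⊕ b = x·y). -/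
/-- Every no-signaling (2,2,2) box satisfies `B_CHSH ≥ 3 + 2·B_H`, where
`B_CHSH` is the sum of `P(a,b|x,y)` over all quadruples with `a ⊕ b = x·y`. -/
theorem chsh_ge_hardy (P : Fin 2 → Fin 2 → Fin 2 → Fin 2 → ℝ)
    (hpos : ∀ a b x y, 0 ≤ P a b x y)
    (hnorm : ∀ x y, ∑ a, ∑ b, P a b x y = 1)
    (hnsA : ∀ a x y y', ∑ b, P a b x y = ∑ b, P a b x y')
    (hnsB : ∀ b y x x', ∑ a, P a b x y = ∑ a, P a b x' y) :
    3 + 2 * (P 0 0 0 0 - (P 0 1 0 1 + P 1 0 1 0 + P 0 0 1 1)) ≤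
      ∑ a : Fin 2, ∑ b : Fin 2, ∑ x : Fin 2, ∑ y : Fin 2,
        if a + b = x * y then P a b x y else 0 := by
  have n00 := hnorm 0 0
  have n01 := hnorm 0 1
  have n10 := hnorm 1 0
  have n11 := hnorm 1 1
  have a00 := hnsA 0 0 0 1
  have a01 := hnsA 0 1 0 1
  have a10 := hnsA 1 0 0 1
  have a11 := hnsA 1 1 0 1
  have b00 := hnsB 0 0 0 1
  have b01 := hnsB 0 1 0 1
  have b10 := hnsB 1 0 0 1
  have b11 := hnsB 1 1 0 1
  have h2 : (1 : Fin 2) + 1 = 0 := rfl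
  simp only [Fin.sum_univ_two] at *
  simp [h2]
  linarith
end

section
/- Let 0 ≤ ε < 1/2. Let P(a,b,x,y) be a measurement-dependent local distribution on {0,1}⁴, i.e. P(a,b,x,y) = Σ_λ q(λ)·p(x,y|λ)·p(a|x,λ)·p(b|y,λ) for some finite probability distribution q, conditional distributions p(a|x,λ), p(b|y,λ) on {0,1}, and input distributions p(x,y|λ) on {0,1}² satisfying (1/2−ε)² ≤ p(x,y|λ) ≤ (1/2+ε)² for all x,y,λ. Then (1/2−ε)²·P(0,0,0,0) − (1/2+ε)²·(P(0,1,0,1) + P(1,0,1,0) + P(0,0,1,1)) ≤ 0. -/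
theorem chsh_aux (a b c d a' b' c' d' : ℝ) (ha : 0 ≤ a) (hb : 0 ≤ b) (hc : 0 ≤ c) (hd : 0 ≤ d)
    (ha' : 0 ≤ a') (hb' : 0 ≤ b') (hc' : 0 ≤ c') (hd' : 0 ≤ d')
    (h1 : a + a' = 1) (h2 : b + b' = 1) (h3 : c + c' = 1) (h4 : d + d' = 1) :
    a * b ≤ a * d' + c' * b + c * d := by
  have key : a * d' + c' * b + c * d - a * b =
      a * b * c' * d' + a * b' * (d' + c * d) + a' * b * (c' + c * d) + a' * b' * (c * d) := by
    obtain rfl : a' = 1 - a := by linarith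
    obtain rfl : b' = 1 - b := by linarith
    obtain rfl : c' = 1 - c := by linarith
    obtain rfl : d' = 1 - d := by linarith
    ring
  have : 0 ≤ a * b * c' * d' + a * b' * (d' + c * d) + a' * b * (c' + c * d)
      + a' * b' * (c * d) := by positivity
  linarith

/-- Every measurement-dependent local distribution, with input distributions
satisfying the SV bounds `(1/2−ε)² ≤ p(x,y|λ) ≤ (1/2+ε)²`, satisfies the MDL
inequality from the Hardy paradox. -/
theorem mdl_inequality (ε : ℝ) (hε0 : 0 ≤ ε) (hε1 : ε < 1 / 2)
    (P : Fin 2 → Fin 2 → Fin 2 → Fin 2 → ℝ)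
    (Λ : Type) (s : Finset Λ) (q : Λ → ℝ)
    (pin : Λ → Fin 2 → Fin 2 → ℝ)
    (pa : Λ → Fin 2 → Fin 2 → ℝ) (pb : Λ → Fin 2 → Fin 2 → ℝ)
    (hq0 : ∀ l ∈ s, 0 ≤ q l) (hq1 : ∑ l ∈ s, q l = 1)
    (hpin0 : ∀ l ∈ s, ∀ x y, 0 ≤ pin l x y)
    (hpin1 : ∀ l ∈ s, ∑ x, ∑ y, pin l x y = 1)
    (hpinlow : ∀ l ∈ s, ∀ x y, (1 / 2 - ε) ^ 2 ≤ pin l x y)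
    (hpinhigh : ∀ l ∈ s, ∀ x y, pin l x y ≤ (1 / 2 + ε) ^ 2)
    (hpa0 : ∀ l ∈ s, ∀ a x, 0 ≤ pa l a x) (hpa1 : ∀ l ∈ s, ∀ x, ∑ a, pa l a x = 1)
    (hpb0 : ∀ l ∈ s, ∀ b y, 0 ≤ pb l b y) (hpb1 : ∀ l ∈ s, ∀ y, ∑ b, pb l b y = 1)
    (hP : ∀ a b x y, P a b x y = ∑ l ∈ s, q l * pin l x y * pa l a x * pb l b y) :
    (1 / 2 - ε) ^ 2 * P 0 0 0 0 -
        (1 / 2 + ε) ^ 2 * (P 0 1 0 1 + P 1 0 1 0 + P 0 0 1 1) ≤ 0 := by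
  simp only [hP]
  rw [← Finset.sum_add_distrib, ← Finset.sum_add_distrib, Finset.mul_sum, Finset.mul_sum,
    ← Finset.sum_sub_distrib]
  apply Finset.sum_nonpos
  intro l hl
  have e1 := hpa1 l hl 0
  have e2 := hpb1 l hl 0
  have e3 := hpa1 l hl 1
  have e4 := hpb1 l hl 1
  rw [Fin.sum_univ_two] at e1 e2 e3 e4
  have A := hpa0 l hl
  have B := hpb0 l hl
  have key := chsh_aux _ _ _ _ _ _ _ _ (A 0 0) (B 0 0) (A 0 1) (B 0 1) (A 1 0) (B 1 0) (A 1 1)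
    (B 1 1) e1 e2 e3 e4
  have hq := hq0 l hl
  have hL : 0 ≤ (1 / 2 - ε) ^ 2 := sq_nonneg _
  have hH : 0 ≤ (1 / 2 + ε) ^ 2 := sq_nonneg _
  have u := hpinhigh l hl 0 0
  have v1 := hpinlow l hl 0 1
  have v2 := hpinlow l hl 1 0
  have v3 := hpinlow l hl 1 1
  generalize (1 / 2 - ε) ^ 2 = L at *
  generalize (1 / 2 + ε) ^ 2 = H at *
  have t0 := mul_le_mul_of_nonneg_right u (mul_nonneg (mul_nonneg hL hq) (mul_nonneg (A 0 0) (B 0 0)))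
  have t1 := mul_le_mul_of_nonneg_right v1 (mul_nonneg (mul_nonneg hH hq) (mul_nonneg (A 0 0) (B 1 1)))
  have t2 := mul_le_mul_of_nonneg_right v2 (mul_nonneg (mul_nonneg hH hq) (mul_nonneg (A 1 1) (B 0 0)))
  have t3 := mul_le_mul_of_nonneg_right v3 (mul_nonneg (mul_nonneg hH hq) (mul_nonneg (A 0 1) (B 0 1)))
  have k := mul_le_mul_of_nonneg_left key (mul_nonneg (mul_nonneg hL hH) hq)
  linarith
end
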